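/- arXiv:1210.7110 — 9 statements merged into one kernel-verified Lean document; each statement's English description precedes it below -/
import Mathlib

section
/- For all smooth vector fields X, Y : ℝ³ → ℝ³ and all p ∈ ℝ³, the torsion of the adapted covariant derivative satisfies ∇̄_X Y(p) − ∇̄_Y X(p) − [X,Y](p) = −(X(p)₁·Y(p)₂ − X(p)₂·Y(p)₁)·e₀(p); that is, the torsion tensor of ∇̄ equals −e¹∧e² ⊗ e₀ = de⁰ ⊗ e₀. -/
open Real MeasureTheory

noncomputable section

/-- The Heisenberg group `ℍ¹` in exponential coordinates, as `ℝ³`. -/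
abbrev H3 : Type := Fin 3 → ℝ

/-- Left invariant vector field `e₀`. -/
def E0 : H3 → H3 := fun _ => ![0, 0, 1]

/-- Left invariant vector field `e₁`. -/
def E1 : H3 → H3 := fun p => ![1, 0, -p 1 / 2]

/-- Left invariant vector field `e₂`. -/
def E2 : H3 → H3 := fun p => ![0, 1, p 0 / 2]

/-- Dual coframe element `e⁰` (the contact form). -/
def e0' (p v : H3) : ℝ := v 2 + (p 1 * v 0 - p 0 * v 1) / 2

/-- Dual coframe element `e¹`. -/
def e1' (_p v : H3) : ℝ := v 0

/-- Dual coframe element `e²`. -/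
def e2' (_p v : H3) : ℝ := v 1

/-- Lie bracket of vector fields on `ℝ³`. -/
def lie (V W : H3 → H3) (p : H3) : H3 :=
  fderiv ℝ W p (V p) - fderiv ℝ V p (W p)

/-- The adapted covariant derivative `∇̄_X Y`, for which the left invariant
frame `e₀, e₁, e₂` is parallel. -/
def nablaBar (X Y : H3 → H3) (p : H3) : H3 :=
  fderiv ℝ (fun q => e0' q (Y q)) p (X p) • E0 p
  + fderiv ℝ (fun q => Y q 0) p (X p) • E1 p
  + fderiv ℝ (fun q => Y q 1) p (X p) • E2 p

/-- The coordinates of the derivative of a vector field are the derivatives of its coordinates. -/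
lemma hasFDerivAt_coord {Y : H3 → H3} {p : H3} (hY : DifferentiableAt ℝ Y p) (i : Fin 3) :
    HasFDerivAt (fun q => Y q i) ((ContinuousLinearMap.proj i).comp (fderiv ℝ Y p)) p :=
  hasFDerivAt_pi'.1 hY.hasFDerivAt i

lemma fderiv_coord {Y : H3 → H3} {p : H3} (hY : DifferentiableAt ℝ Y p) (i : Fin 3) (v : H3) :
    fderiv ℝ (fun q => Y q i) p v = fderiv ℝ Y p v i := by
  rw [(hasFDerivAt_coord hY i).fderiv]
  rfl

/-- Leibniz rule for the `e₀`-component of a vector field. -/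
lemma fderiv_contact_form {Y : H3 → H3} {p : H3} (hY : DifferentiableAt ℝ Y p) (v : H3) :
    fderiv ℝ (fun q => e0' q (Y q)) p v
      = e0' p (fderiv ℝ Y p v) + (v 1 * Y p 0 - v 0 * Y p 1) / 2 := by
  have hproj (i : Fin 3) : HasFDerivAt (fun q : H3 => q i)
      (ContinuousLinearMap.proj (R := ℝ) (φ := fun _ : Fin 3 => ℝ) i) p :=
    hasFDerivAt_apply i p
  have h := (hasFDerivAt_coord hY 2).add
    ((((hproj 1).mul (hasFDerivAt_coord hY 0)).sub
      ((hproj 0).mul (hasFDerivAt_coord hY 1))).mul_const (2⁻¹ : ℝ))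
  have hfun : HasFDerivAt (fun q => e0' q (Y q)) _ p := h
  rw [hfun.fderiv, e0']
  simp
  ring

/-- `∇̄` differs from the flat derivative of `ℝ³` by half of its torsion. -/
lemma nablaBar_eq_fderiv_add {X Y : H3 → H3} {p : H3} (hY : DifferentiableAt ℝ Y p) :
    nablaBar X Y p
      = fderiv ℝ Y p (X p) + ((X p 1 * Y p 0 - X p 0 * Y p 1) / 2) • E0 p := by
  rw [nablaBar, fderiv_contact_form hY, fderiv_coord hY, fderiv_coord hY]
  ext i
  fin_cases i <;> simp [e0', E0, E1, E2]
  ring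

/-- The torsion of the adapted covariant derivative equals `−e¹∧e² ⊗ e₀ = de⁰ ⊗ e₀`:
`∇̄_X Y − ∇̄_Y X − [X,Y] = −(X₁Y₂ − X₂Y₁)·e₀`. -/
theorem nablaBar_torsion (X Y : H3 → H3)
    (hX : ContDiff ℝ (⊤ : ℕ∞) X) (hY : ContDiff ℝ (⊤ : ℕ∞) Y) :
    ∀ p : H3,
      nablaBar X Y p - nablaBar Y X p - lie X Y p
        = (-(X p 0 * Y p 1 - X p 1 * Y p 0)) • E0 p := by
  intro p
  rw [nablaBar_eq_fderiv_add (hY.differentiable (by simp) p),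
    nablaBar_eq_fderiv_add (hX.differentiable (by simp) p), lie]
  module
end
end

section
/- Let U ⊆ ℝ³ be open, α, A : U → ℝ smooth, and let g : U → ℝ³ be the Gauss map g(p) = (cos α(p), sin α(p), −A(p)), taking values in the cylinder {q : q₁² + q₂² = 1}. Let f̃¹_q(u) = −q₂u₁ + q₁u₂ and f̃²_q(u) = e⁰_q(u) = u₃ + (1/2)(q₂u₁ − q₁u₂) be the coframe on the cylinder. Then for every p ∈ U and all v, w ∈ ℝ³: f̃¹_{g(p)}(Dg_p(v))·f̃²_{g(p)}(Dg_p(w)) − f̃¹_{g(p)}(Dg_p(w))·f̃²_{g(p)}(Dg_p(v)) = −(dα_p(v)·dA_p(w) − dα_p(w)·dA_p(v)). In other words, the pullback by the Gauss map of the area form f̃¹∧f̃² of the cylinder equals −dα∧dA, so the Gaussian curvature of the surface is K = −(dα∧dA)(f₁,f₂). -/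
open Real MeasureTheory

noncomputable section

/-- The horizontal normal `η = cos α · e₁ + sin α · e₂`. -/
def eta (α : H3 → ℝ) (p : H3) : H3 := cos (α p) • E1 p + sin (α p) • E2 p

/-- The characteristic field `f₁ = −sin α · e₁ + cos α · e₂`. -/
def F1 (α : H3 → ℝ) (p : H3) : H3 := (-sin (α p)) • E1 p + cos (α p) • E2 p

/-- The field `f₂ = e₀ + A·η`. -/
def F2 (α A : H3 → ℝ) (p : H3) : H3 := E0 p + A p • eta α p

/-- The horizontal conormal `η* = cos α · e¹ + sin α · e² − A·e⁰`. -/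
def etaStar (α A : H3 → ℝ) (p v : H3) : ℝ :=
  cos (α p) * e1' p v + sin (α p) * e2' p v - A p * e0' p v

/-- The 1-form `f¹ = −sin α · e¹ + cos α · e²`. -/
def f1' (α : H3 → ℝ) (p v : H3) : ℝ := -sin (α p) * e1' p v + cos (α p) * e2' p v

/-- The 1-form `f² = e⁰`. -/
def f2' (p v : H3) : ℝ := e0' p v

/-- The projected covariant derivative `∇_X Y = ∇̄_X Y − η*(∇̄_X Y)·η`. -/
def nablaP (α A : H3 → ℝ) (X Y : H3 → H3) (p : H3) : H3 :=
  nablaBar X Y p - etaStar α A p (nablaBar X Y p) • eta α p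

/-- The Gauss map `g(p) = (cos α(p), sin α(p), −A(p))`, with values in the cylinder. -/
def gaussMap (α A : H3 → ℝ) (p : H3) : H3 := ![cos (α p), sin (α p), -A p]

/-- The coframe element `f̃¹_q(u) = −q₂u₁ + q₁u₂` on the cylinder. -/
def ft1 (q u : H3) : ℝ := -q 1 * u 0 + q 0 * u 1

/-- The coframe element `f̃²_q(u) = e⁰_q(u)` on the cylinder. -/
def ft2 (q u : H3) : ℝ := u 2 + (q 1 * u 0 - q 0 * u 1) / 2

theorem hasFDerivAt_gaussMap {α A : H3 → ℝ} {p : H3} (hα : DifferentiableAt ℝ α p)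
    (hA : DifferentiableAt ℝ A p) :
    HasFDerivAt (gaussMap α A)
      (ContinuousLinearMap.pi ![-sin (α p) • fderiv ℝ α p, cos (α p) • fderiv ℝ α p,
        -fderiv ℝ A p]) p := by
  rw [hasFDerivAt_pi']
  intro i
  fin_cases i
  · exact hα.hasFDerivAt.cos
  · exact hα.hasFDerivAt.sin
  · exact hA.hasFDerivAt.neg

theorem ft1_fderiv_gaussMap {α A : H3 → ℝ} {p : H3} (hα : DifferentiableAt ℝ α p)
    (hA : DifferentiableAt ℝ A p) (v : H3) :
    ft1 (gaussMap α A p) (fderiv ℝ (gaussMap α A) p v) = fderiv ℝ α p v := by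
  rw [(hasFDerivAt_gaussMap hα hA).fderiv]
  simp [ft1, gaussMap]
  linear_combination fderiv ℝ α p v * sin_sq_add_cos_sq (α p)

theorem ft2_fderiv_gaussMap {α A : H3 → ℝ} {p : H3} (hα : DifferentiableAt ℝ α p)
    (hA : DifferentiableAt ℝ A p) (v : H3) :
    ft2 (gaussMap α A p) (fderiv ℝ (gaussMap α A) p v)
      = -fderiv ℝ A p v - fderiv ℝ α p v / 2 := by
  rw [(hasFDerivAt_gaussMap hα hA).fderiv]
  simp [ft2, gaussMap]
  linear_combination -(fderiv ℝ α p v / 2) * sin_sq_add_cos_sq (α p)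

/-- The pullback by the Gauss map of the area form `f̃¹∧f̃²` of the cylinder
equals `−dα∧dA`, so the Gaussian curvature is `K = −(dα∧dA)(f₁,f₂)`. -/
theorem gaussMap_pullback_area (U : Set H3) (hU : IsOpen U) (α A : H3 → ℝ)
    (hα : ContDiffOn ℝ (⊤ : ℕ∞) α U) (hA : ContDiffOn ℝ (⊤ : ℕ∞) A U) :
    ∀ p ∈ U, ∀ v w : H3,
      ft1 (gaussMap α A p) (fderiv ℝ (gaussMap α A) p v)
          * ft2 (gaussMap α A p) (fderiv ℝ (gaussMap α A) p w)
        - ft1 (gaussMap α A p) (fderiv ℝ (gaussMap α A) p w)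
          * ft2 (gaussMap α A p) (fderiv ℝ (gaussMap α A) p v)
        = -(fderiv ℝ α p v * fderiv ℝ A p w - fderiv ℝ α p w * fderiv ℝ A p v) := by
  intro p hp v w
  have hUp : U ∈ nhds p := hU.mem_nhds hp
  have hαp : DifferentiableAt ℝ α p := (hα.contDiffAt hUp).differentiableAt (by simp)
  have hAp : DifferentiableAt ℝ A p := (hA.contDiffAt hUp).differentiableAt (by simp)
  simp only [ft1_fderiv_gaussMap hαp hAp, ft2_fderiv_gaussMap hαp hAp]
  ring
end
end

section
/- For all smooth vector fields X, Y on U and all p ∈ U, the Cartan formula for the exterior derivative of the horizontal conormal η* gives: D(q ↦ η*_q(Y(q)))_p(X(p)) − D(q ↦ η*_q(X(q)))_p(Y(p)) − η*_p([X,Y](p)) = [(dα + A²f² + Aη*) ∧ f¹ − dA ∧ f²]_p(X(p), Y(p)), where for 1-forms θ, σ one sets (θ∧σ)(v,w) = θ(v)σ(w) − θ(w)σ(v); that is, dη* = (dα + A²f² + Aη*)∧f¹ − dA∧f². -/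
open Real MeasureTheory

noncomputable section

/-- Product rule for the pairing of the horizontal conormal with a vector field. -/
theorem fderiv_etaStar_apply {α A : H3 → ℝ} {Y : H3 → H3} {p : H3}
    (hα : DifferentiableAt ℝ α p) (hA : DifferentiableAt ℝ A p)
    (hY : DifferentiableAt ℝ Y p) (w : H3) :
    fderiv ℝ (fun q => etaStar α A q (Y q)) p w
      = fderiv ℝ α p w * f1' α p (Y p) - fderiv ℝ A p w * f2' p (Y p)
        + etaStar α A p (fderiv ℝ Y p w) - A p * ((w 1 * Y p 0 - w 0 * Y p 1) / 2) := by
  have hcoord (i : Fin 3) : HasFDerivAt (fun q : H3 => q i)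
      (ContinuousLinearMap.proj (R := ℝ) (φ := fun _ : Fin 3 => ℝ) i) p :=
    hasFDerivAt_apply i p
  have hYc := hasFDerivAt_pi'.1 hY.hasFDerivAt
  have he0 := (hYc 2).add ((((hcoord 1).mul (hYc 0)).sub ((hcoord 0).mul (hYc 1))).mul_const
    (2⁻¹ : ℝ))
  have h := ((hα.hasFDerivAt.cos.mul (hYc 0)).add (hα.hasFDerivAt.sin.mul (hYc 1))).sub
    (hA.hasFDerivAt.mul he0)
  have h' : HasFDerivAt (fun q => etaStar α A q (Y q)) _ p := h
  rw [h'.fderiv]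
  simp [etaStar, f1', f2', e0', e1', e2']
  ring

/-- Cartan's formula for the exterior derivative of the horizontal conormal:
`dη* = (dα + A²f² + Aη*)∧f¹ − dA∧f²`, where `(θ∧σ)(v,w) = θ(v)σ(w) − θ(w)σ(v)`. -/
theorem d_etaStar (U : Set H3) (hU : IsOpen U) (α A : H3 → ℝ)
    (hα : ContDiffOn ℝ (⊤ : ℕ∞) α U) (hA : ContDiffOn ℝ (⊤ : ℕ∞) A U)
    (X Y : H3 → H3) (hX : ContDiffOn ℝ (⊤ : ℕ∞) X U) (hY : ContDiffOn ℝ (⊤ : ℕ∞) Y U) :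
    ∀ p ∈ U,
      fderiv ℝ (fun q => etaStar α A q (Y q)) p (X p)
        - fderiv ℝ (fun q => etaStar α A q (X q)) p (Y p)
        - etaStar α A p (lie X Y p)
      = ((fderiv ℝ α p (X p) + (A p)^2 * f2' p (X p) + A p * etaStar α A p (X p))
            * f1' α p (Y p)
          - (fderiv ℝ α p (Y p) + (A p)^2 * f2' p (Y p) + A p * etaStar α A p (Y p))
            * f1' α p (X p))
        - (fderiv ℝ A p (X p) * f2' p (Y p) - fderiv ℝ A p (Y p) * f2' p (X p)) := by
  intro p hp
  have hdiff {F : Type} [NormedAddCommGroup F] [NormedSpace ℝ F] {f : H3 → F}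
      (hf : ContDiffOn ℝ (⊤ : ℕ∞) f U) : DifferentiableAt ℝ f p :=
    (hf.contDiffAt (hU.mem_nhds hp)).differentiableAt (by simp)
  rw [fderiv_etaStar_apply (hdiff hα) (hdiff hA) (hdiff hY),
    fderiv_etaStar_apply (hdiff hα) (hdiff hA) (hdiff hX)]
  simp only [etaStar, f1', f2', e0', e1', e2', lie, Pi.sub_apply]
  linear_combination (-A p * (X p 0 * Y p 1 - X p 1 * Y p 0)) * sin_sq_add_cos_sq (α p)
end
end

section
/- For every p ∈ U, η*_p([f₁,f₂](p)) = dα_p(f₂(p)) + dA_p(f₁(p)) + A(p)². In particular, if the plane field annihilated by η* (spanned by f₁ and f₂) is involutive, i.e. η*_p([f₁,f₂](p)) = 0 for all p ∈ U (as happens when f₁, f₂ span the tangent planes of a surface), then dα(f₂) = −(dA(f₁) + A²) on U. -/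
open Real MeasureTheory

noncomputable section

/-- The derivative of `f₁` in coordinates. -/
theorem fderiv_F1_apply {α : H3 → ℝ} {p : H3} (hα : DifferentiableAt ℝ α p) (v : H3) :
    fderiv ℝ (F1 α) p v =
      ![-cos (α p) * fderiv ℝ α p v, -sin (α p) * fderiv ℝ α p v,
        (cos (α p) * p 1 - sin (α p) * p 0) / 2 * fderiv ℝ α p v
          + (sin (α p) * v 1 + cos (α p) * v 0) / 2] := by
  have hc (i : Fin 3) : HasFDerivAt (fun q : H3 => q i)
      (ContinuousLinearMap.proj (R := ℝ) (φ := fun _ : Fin 3 => ℝ) i) p := hasFDerivAt_apply i p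
  have hs := hα.hasFDerivAt.sin
  have hcos := hα.hasFDerivAt.cos
  have key : HasFDerivAt (F1 α) (ContinuousLinearMap.pi
      ![-(cos (α p) • fderiv ℝ α p), -sin (α p) • fderiv ℝ α p,
        (1 / 2 : ℝ) • ((sin (α p) • ContinuousLinearMap.proj 1 + p 1 • (cos (α p) • fderiv ℝ α p))
          + (cos (α p) • ContinuousLinearMap.proj 0 + p 0 • (-sin (α p) • fderiv ℝ α p)))]) p := by
    rw [hasFDerivAt_pi']
    intro i
    fin_cases i
    · exact hs.neg.congr_of_eventuallyEq (.of_forall fun q => by simp [F1, E1, E2])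
    · exact hcos.congr_of_eventuallyEq (.of_forall fun q => by simp [F1, E1, E2])
    · exact (((hs.mul (hc 1)).add (hcos.mul (hc 0))).const_mul (1 / 2)).congr_of_eventuallyEq
        (.of_forall fun q => by simp [F1, E1, E2]; ring)
  rw [key.fderiv]
  ext i
  fin_cases i <;> simp
  ring

/-- The derivative of `f₂` in coordinates. -/
theorem fderiv_F2_apply {α A : H3 → ℝ} {p : H3} (hα : DifferentiableAt ℝ α p)
    (hA : DifferentiableAt ℝ A p) (v : H3) :
    fderiv ℝ (F2 α A) p v =
      fderiv ℝ A p v • eta α p + A p •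
        ![-sin (α p) * fderiv ℝ α p v, cos (α p) * fderiv ℝ α p v,
          (sin (α p) * p 1 + cos (α p) * p 0) / 2 * fderiv ℝ α p v
            + (sin (α p) * v 0 - cos (α p) * v 1) / 2] := by
  have hc (i : Fin 3) : HasFDerivAt (fun q : H3 => q i)
      (ContinuousLinearMap.proj (R := ℝ) (φ := fun _ : Fin 3 => ℝ) i) p := hasFDerivAt_apply i p
  have hs := hα.hasFDerivAt.sin
  have hcos := hα.hasFDerivAt.cos
  have key : HasFDerivAt (eta α) (ContinuousLinearMap.pi
      ![-sin (α p) • fderiv ℝ α p, cos (α p) • fderiv ℝ α p,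
        (1 / 2 : ℝ) • ((sin (α p) • ContinuousLinearMap.proj 0 + p 0 • (cos (α p) • fderiv ℝ α p))
          - (cos (α p) • ContinuousLinearMap.proj 1 + p 1 • (-sin (α p) • fderiv ℝ α p)))]) p := by
    rw [hasFDerivAt_pi']
    intro i
    fin_cases i
    · exact hcos.congr_of_eventuallyEq (.of_forall fun q => by simp [eta, E1, E2])
    · exact hs.congr_of_eventuallyEq (.of_forall fun q => by simp [eta, E1, E2])
    · exact (((hs.mul (hc 0)).sub (hcos.mul (hc 1))).const_mul (1 / 2)).congr_of_eventuallyEq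
        (.of_forall fun q => by simp [eta, E1, E2]; ring)
  have hF2 : HasFDerivAt (F2 α A) _ p := (hA.hasFDerivAt.smul key).const_add ![0, 0, 1]
  rw [hF2.fderiv]
  ext i
  fin_cases i <;> simp <;> ring

/-- `η*([f₁,f₂]) = dα(f₂) + dA(f₁) + A²`; in particular, if the plane field
annihilated by `η*` is involutive then `dα(f₂) = −(dA(f₁) + A²)` on `U`. -/
theorem etaStar_bracket_f1_f2 (U : Set H3) (hU : IsOpen U) (α A : H3 → ℝ)
    (hα : ContDiffOn ℝ (⊤ : ℕ∞) α U) (hA : ContDiffOn ℝ (⊤ : ℕ∞) A U) :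
    (∀ p ∈ U,
      etaStar α A p (lie (F1 α) (F2 α A) p)
        = fderiv ℝ α p (F2 α A p) + fderiv ℝ A p (F1 α p) + (A p)^2)
    ∧ ((∀ p ∈ U, etaStar α A p (lie (F1 α) (F2 α A) p) = 0) →
        ∀ p ∈ U, fderiv ℝ α p (F2 α A p) = -(fderiv ℝ A p (F1 α p) + (A p)^2)) := by
  have bracket : ∀ p ∈ U, etaStar α A p (lie (F1 α) (F2 α A) p)
      = fderiv ℝ α p (F2 α A p) + fderiv ℝ A p (F1 α p) + (A p)^2 := by
    intro p hp
    have hα' : DifferentiableAt ℝ α p :=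
      (hα.contDiffAt (hU.mem_nhds hp)).differentiableAt (by simp)
    have hA' : DifferentiableAt ℝ A p :=
      (hA.contDiffAt (hU.mem_nhds hp)).differentiableAt (by simp)
    rw [lie, fderiv_F1_apply hα', fderiv_F2_apply hα' hA']
    generalize fderiv ℝ α p (F2 α A p) = a
    generalize fderiv ℝ α p (F1 α p) = b
    generalize fderiv ℝ A p (F1 α p) = c
    have h := sin_sq_add_cos_sq (α p)
    simp [etaStar, e0', e1', e2', eta, F1, F2, E0, E1, E2]
    generalize sin (α p) = s at *
    generalize cos (α p) = t at *
    grind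
  exact ⟨bracket, fun h p hp => by linarith [bracket p hp, h p hp]⟩
end
end

section
/- For all smooth vector fields X, Y on U and all p ∈ U, the curvature of the projected covariant derivative satisfies R(X,Y)f₁ := ∇_X(∇_Y f₁)(p) − ∇_Y(∇_X f₁)(p) − ∇_{[X,Y]} f₁(p) = 0 and R(X,Y)f₂ := ∇_X(∇_Y f₂)(p) − ∇_Y(∇_X f₂)(p) − ∇_{[X,Y]} f₂(p) = (dA_p(X(p))·dα_p(Y(p)) − dA_p(Y(p))·dα_p(X(p)))·f₁(p); that is, the curvature tensor of ∇ is R = dA∧dα ⊗ f² ⊗ f₁, and the Gaussian curvature is K = ⟨R(f₁,f₂)f₂, f₁⟩ = (dA∧dα)(f₁,f₂). -/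
open Real MeasureTheory

noncomputable section

/-- `∇_X Y` at a point depends on `Y` only through its germ there. -/
theorem nablaP_congr_of_eventuallyEq (α A : H3 → ℝ) (X : H3 → H3) {Y Z : H3 → H3} {p : H3}
    (h : Y =ᶠ[nhds p] Z) : nablaP α A X Y p = nablaP α A X Z p := by
  have h0 : (fun q => e0' q (Y q)) =ᶠ[nhds p] fun q => e0' q (Z q) :=
    h.mono fun q hq => by simp only [hq]
  have h1 (i : Fin 3) : (fun q => Y q i) =ᶠ[nhds p] fun q => Z q i :=
    h.mono fun q hq => by simp only [hq]
  simp only [nablaP, nablaBar, h0.fderiv_eq, (h1 _).fderiv_eq]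

/-- `f₁` is parallel for the projected covariant derivative, so `∇_X (g f₁) = (X g) f₁`. -/
theorem nablaP_smul_F1 {α g : H3 → ℝ} (A : H3 → ℝ) (X : H3 → H3) {p : H3}
    (hα : DifferentiableAt ℝ α p) (hg : DifferentiableAt ℝ g p) :
    nablaP α A X (fun q => g q • F1 α q) p = fderiv ℝ g p (X p) • F1 α p := by
  have h0 : (fun q => e0' q (g q • F1 α q)) = fun _ => 0 := by
    funext q
    simp [e0', F1, E1, E2]
    ring
  have h1 : (fun q => (g q • F1 α q) 0) = fun q => g q * -sin (α q) := by
    funext q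
    simp [F1, E1, E2]
  have h2 : (fun q => (g q • F1 α q) 1) = fun q => g q * cos (α q) := by
    funext q
    simp [F1, E1, E2]
  have d1 := (hg.hasFDerivAt.mul hα.hasFDerivAt.sin.neg).fderiv
  have d2 := (hg.hasFDerivAt.mul hα.hasFDerivAt.cos).fderiv
  have hsc := sin_sq_add_cos_sq (α p)
  unfold nablaP nablaBar
  rw [h0, h1, h2]
  erw [d1, d2]
  ext i
  fin_cases i <;> simp [etaStar, e0', e1', e2', eta, F1, E0, E1, E2] <;> grind

/-- `∇_X f₂ = A dα(X) f₁`. -/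
theorem nablaP_F2 {α A : H3 → ℝ} (X : H3 → H3) {p : H3}
    (hα : DifferentiableAt ℝ α p) (hA : DifferentiableAt ℝ A p) :
    nablaP α A X (F2 α A) p = (A p * fderiv ℝ α p (X p)) • F1 α p := by
  have h0 : (fun q => e0' q (F2 α A q)) = fun _ => 1 := by
    funext q
    simp [e0', F2, eta, E0, E1, E2]
    ring
  have h1 : (fun q => F2 α A q 0) = fun q => A q * cos (α q) := by
    funext q
    simp [F2, eta, E0, E1, E2]
  have h2 : (fun q => F2 α A q 1) = fun q => A q * sin (α q) := by
    funext q
    simp [F2, eta, E0, E1, E2]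
  have d1 := (hA.hasFDerivAt.mul hα.hasFDerivAt.cos).fderiv
  have d2 := (hA.hasFDerivAt.mul hα.hasFDerivAt.sin).fderiv
  have hsc := sin_sq_add_cos_sq (α p)
  unfold nablaP nablaBar
  rw [h0, h1, h2]
  erw [d1, d2]
  ext i
  fin_cases i <;> simp [etaStar, e0', e1', e2', eta, F1, E0, E1, E2] <;> grind

/-- `∇_X f₁ = 0`. -/
theorem nablaP_F1 {α : H3 → ℝ} (A : H3 → ℝ) (X : H3 → H3) {p : H3}
    (hα : DifferentiableAt ℝ α p) : nablaP α A X (F1 α) p = 0 := by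
  simpa using nablaP_smul_F1 (g := fun _ => 1) A X hα (differentiableAt_const 1)

/-- `∇_X 0 = 0`. -/
theorem nablaP_zero (α A : H3 → ℝ) (X : H3 → H3) (p : H3) :
    nablaP α A X (fun _ => 0) p = 0 := by
  simp [nablaP, nablaBar, etaStar, e0', e1', e2']

/-- The curvature tensor of the projected covariant derivative is
`R = dA∧dα ⊗ f² ⊗ f₁`: it kills `f₁` and sends `f₂` to `(dA∧dα)(X,Y)·f₁`. -/
theorem nablaP_curvature (U : Set H3) (hU : IsOpen U) (α A : H3 → ℝ)
    (hα : ContDiffOn ℝ (⊤ : ℕ∞) α U) (hA : ContDiffOn ℝ (⊤ : ℕ∞) A U)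
    (X Y : H3 → H3) (hX : ContDiffOn ℝ (⊤ : ℕ∞) X U) (hY : ContDiffOn ℝ (⊤ : ℕ∞) Y U) :
    ∀ p ∈ U,
      (nablaP α A X (fun q => nablaP α A Y (F1 α) q) p
          - nablaP α A Y (fun q => nablaP α A X (F1 α) q) p
          - nablaP α A (lie X Y) (F1 α) p = 0)
      ∧ (nablaP α A X (fun q => nablaP α A Y (F2 α A) q) p
          - nablaP α A Y (fun q => nablaP α A X (F2 α A) q) p
          - nablaP α A (lie X Y) (F2 α A) p
        = (fderiv ℝ A p (X p) * fderiv ℝ α p (Y p)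
            - fderiv ℝ A p (Y p) * fderiv ℝ α p (X p)) • F1 α p) := by
  intro p hp
  have hUp : U ∈ nhds p := hU.mem_nhds hp
  have hdα : ∀ q ∈ U, DifferentiableAt ℝ α q := fun q hq =>
    (hα.contDiffAt (hU.mem_nhds hq)).differentiableAt (by simp)
  have hdA : ∀ q ∈ U, DifferentiableAt ℝ A q := fun q hq =>
    (hA.contDiffAt (hU.mem_nhds hq)).differentiableAt (by simp)
  have hdX : DifferentiableAt ℝ X p := (hX.contDiffAt hUp).differentiableAt (by simp)
  have hdY : DifferentiableAt ℝ Y p := (hY.contDiffAt hUp).differentiableAt (by simp)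
  have hddα : DifferentiableAt ℝ (fderiv ℝ α) p :=
    ((hα.contDiffAt hUp).fderiv_right (m := 1) (by norm_cast)).differentiableAt
      (by simp)
  have hsymm : IsSymmSndFDerivAt ℝ α p :=
    (hα.contDiffAt hUp).isSymmSndFDerivAt (by simp; norm_cast)
  have hF1 (V W : H3 → H3) : nablaP α A V (fun q => nablaP α A W (F1 α) q) p = 0 := by
    rw [nablaP_congr_of_eventuallyEq α A V (Z := fun _ => 0)
      (Filter.mem_of_superset hUp fun q hq => nablaP_F1 A W (hdα q hq)), nablaP_zero]
  have hF2 (V W : H3 → H3) (hW : DifferentiableAt ℝ W p) :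
      nablaP α A V (fun q => nablaP α A W (F2 α A) q) p
        = (A p * (fderiv ℝ (fderiv ℝ α) p (V p) (W p) + fderiv ℝ α p (fderiv ℝ W p (V p)))
            + fderiv ℝ A p (V p) * fderiv ℝ α p (W p)) • F1 α p := by
    have hd := (hdA p hp).hasFDerivAt.mul (hddα.hasFDerivAt.clm_apply hW.hasFDerivAt)
    rw [nablaP_congr_of_eventuallyEq α A V
      (Z := fun q => (A q * fderiv ℝ α q (W q)) • F1 α q)
      (Filter.mem_of_superset hUp fun q hq => nablaP_F2 W (hdα q hq) (hdA q hq)),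
      nablaP_smul_F1 (g := fun q => A q * fderiv ℝ α q (W q)) A V (hdα p hp) hd.differentiableAt]
    congr 1
    erw [hd.fderiv]
    simp
    ring
  refine ⟨by rw [hF1, hF1, nablaP_F1 A _ (hdα p hp)]; simp, ?_⟩
  rw [hF2 X Y hdY, hF2 Y X hdX, nablaP_F2 _ (hdα p hp) (hdA p hp), hsymm.eq (X p) (Y p),
    ← sub_smul, ← sub_smul]
  congr 1
  simp only [lie, map_sub]
  ring
end
end

section
/- Assume that dα(f₂) + dA(f₁) + A² = 0 on U (equivalently, the plane field spanned by f₁, f₂ is involutive, as happens when it is tangent to a surface). Then the second fundamental form V(X,Y) = −dα(X)·f¹(Y) + dA(X)·f²(Y) satisfies, for every p ∈ U and all tangent vectors v, w at p (η*_p(v) = η*_p(w) = 0): V_p(v,w) − V_p(w,v) = −A(p)²·(f¹_p(v)·f²_p(w) − f¹_p(w)·f²_p(v)); in particular V is not symmetric unless A = 0. -/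
open Real MeasureTheory

noncomputable section

/-- The pointwise second fundamental form `V_p(v,w) = −dα_p(v)·f¹_p(w) + dA_p(v)·f²_p(w)`. -/
def secondFF (α A : H3 → ℝ) (p v w : H3) : ℝ :=
  -(fderiv ℝ α p v) * f1' α p w + fderiv ℝ A p v * f2' p w

/-- A vector annihilated by `η*` is the combination of `f₁, f₂` with coefficients given by
the dual forms `f¹, f²`. -/
lemma eq_f1'_smul_F1_add_f2'_smul_F2 {α A : H3 → ℝ} {p v : H3} (hv : etaStar α A p v = 0) :
    v = f1' α p v • F1 α p + f2' p v • F2 α A p := by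
  have hsc := sin_sq_add_cos_sq (α p)
  simp only [etaStar, e1', e2', e0'] at hv
  ext i
  fin_cases i <;> simp [F1, F2, eta, E0, E1, E2, f1', f2', e0', e1', e2']
  · linear_combination cos (α p) * hv - v 0 * hsc
  · linear_combination sin (α p) * hv - v 1 * hsc
  · linear_combination (p 0 * sin (α p) / 2 - p 1 * cos (α p) / 2) * hv
      + (p 1 * v 0 / 2 - p 0 * v 1 / 2) * hsc

/-- If `dα(f₂) + dA(f₁) + A² = 0` on `U` (involutivity), then the antisymmetric part of
the second fundamental form on tangent vectors is `V(v,w) − V(w,v) = −A²·(f¹∧f²)(v,w)`. -/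
theorem secondFF_antisymmetric_part (U : Set H3) (hU : IsOpen U) (α A : H3 → ℝ)
    (hα : ContDiffOn ℝ (⊤ : ℕ∞) α U) (hA : ContDiffOn ℝ (⊤ : ℕ∞) A U)
    (hinv : ∀ p ∈ U, fderiv ℝ α p (F2 α A p) + fderiv ℝ A p (F1 α p) + (A p)^2 = 0) :
    ∀ p ∈ U, ∀ v w : H3, etaStar α A p v = 0 → etaStar α A p w = 0 →
      secondFF α A p v w - secondFF α A p w v
        = -(A p)^2 * (f1' α p v * f2' p w - f1' α p w * f2' p v) := by
  intro p hp v w hv hw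
  have expand (φ : H3 → ℝ) {u : H3} (hu : etaStar α A p u = 0) :
      fderiv ℝ φ p u =
        f1' α p u * fderiv ℝ φ p (F1 α p) + f2' p u * fderiv ℝ φ p (F2 α A p) := by
    conv_lhs => rw [eq_f1'_smul_F1_add_f2'_smul_F2 hu]
    simp only [map_add, map_smul, smul_eq_mul]
  simp only [secondFF]
  rw [expand α hv, expand α hw, expand A hv, expand A hw]
  linear_combination (f1' α p v * f2' p w - f1' α p w * f2' p v) * hinv p hp
end
end

section
/- (Gauss equation) Let X, Y, Z be smooth tangent vector fields on U (η* vanishes on each) such that [X,Y] is tangent. Then for all p ∈ U the curvature of the projected covariant derivative satisfies: ∇_X(∇_Y Z)(p) − ∇_Y(∇_X Z)(p) − ∇_{[X,Y]} Z(p) = −( V(Y,Z)(p)·dα_p(X(p)) − V(X,Z)(p)·dα_p(Y(p)) )·f₁(p), where V(X,Y) = −dα(X)·f¹(Y) + dA(X)·f²(Y) is the second fundamental form. -/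
open Real MeasureTheory

noncomputable section

/-- Two vectors with the same left invariant frame components are equal. -/
theorem ext_of_frame_components {p v w : H3} (h0 : e0' p v = e0' p w) (h1 : v 0 = w 0)
    (h2 : v 1 = w 1) : v = w := by
  funext i
  simp only [e0', h1, h2] at h0
  fin_cases i
  · exact h1
  · exact h2
  · exact add_right_cancel h0

theorem etaStar_nablaBar (α A : H3 → ℝ) (X Y : H3 → H3) (p : H3) :
    etaStar α A p (nablaBar X Y p) =
      cos (α p) * fderiv ℝ (fun q => Y q 0) p (X p)
        + sin (α p) * fderiv ℝ (fun q => Y q 1) p (X p)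
        - A p * fderiv ℝ (fun q => e0' q (Y q)) p (X p) := by
  unfold nablaBar
  generalize fderiv ℝ (fun q => e0' q (Y q)) p (X p) = b
  simp [etaStar, E0, E1, E2, e0', e1', e2']
  ring_nf
  simp

theorem e0'_nablaP (α A : H3 → ℝ) (X Y : H3 → H3) (p : H3) :
    e0' p (nablaP α A X Y p) = fderiv ℝ (fun q => e0' q (Y q)) p (X p) := by
  unfold nablaP
  generalize etaStar α A p (nablaBar X Y p) = v
  simp only [nablaBar, eta]
  generalize fderiv ℝ (fun q => e0' q (Y q)) p (X p) = b
  simp [E0, E1, E2, e0']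
  ring

theorem nablaP_apply_zero (α A : H3 → ℝ) (X Y : H3 → H3) (p : H3) :
    nablaP α A X Y p 0 = fderiv ℝ (fun q => Y q 0) p (X p)
      - etaStar α A p (nablaBar X Y p) * cos (α p) := by
  unfold nablaP
  generalize etaStar α A p (nablaBar X Y p) = v
  simp [nablaBar, eta, E0, E1, E2]

theorem nablaP_apply_one (α A : H3 → ℝ) (X Y : H3 → H3) (p : H3) :
    nablaP α A X Y p 1 = fderiv ℝ (fun q => Y q 1) p (X p)
      - etaStar α A p (nablaBar X Y p) * sin (α p) := by
  unfold nablaP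
  generalize etaStar α A p (nablaBar X Y p) = v
  simp [nablaBar, eta, E0, E1, E2]

theorem differentiableAt_fderiv_apply {b : H3 → ℝ} {Y : H3 → H3} {p : H3}
    (hb : ContDiffAt ℝ 2 b p) (hY : DifferentiableAt ℝ Y p) :
    DifferentiableAt ℝ (fun q => fderiv ℝ b q (Y q)) p :=
  ((hb.fderiv_right (m := 1) (by norm_num)).differentiableAt (by norm_num)).clm_apply hY

/-- The Lie bracket acts on functions as the commutator of directional derivatives. -/
theorem fderiv_apply_lie {b : H3 → ℝ} {X Y : H3 → H3} {p : H3}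
    (hb : ContDiffAt ℝ 2 b p) (hX : DifferentiableAt ℝ X p) (hY : DifferentiableAt ℝ Y p) :
    fderiv ℝ b p (lie X Y p) =
      fderiv ℝ (fun q => fderiv ℝ b q (Y q)) p (X p)
        - fderiv ℝ (fun q => fderiv ℝ b q (X q)) p (Y p) := by
  have hd : DifferentiableAt ℝ (fderiv ℝ b) p :=
    (hb.fderiv_right (m := 1) (by norm_num)).differentiableAt (by norm_num)
  have hsymm : fderiv ℝ (fderiv ℝ b) p (X p) (Y p) = fderiv ℝ (fderiv ℝ b) p (Y p) (X p) :=
    (hb.isSymmSndFDerivAt (by simp)) (X p) (Y p)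
  rw [fderiv_clm_apply hd hY, fderiv_clm_apply hd hX]
  simp [lie, hsymm]

/-- For a tangent field `Z`, the normal component of `∇̄_X Z` is the second fundamental form. -/
theorem etaStar_nablaBar_eq_secondFF {α A : H3 → ℝ} {X Z : H3 → H3} {p : H3}
    (hα : DifferentiableAt ℝ α p) (hA : DifferentiableAt ℝ A p) (hZ : DifferentiableAt ℝ Z p)
    (htan : ∀ᶠ q in nhds p, etaStar α A q (Z q) = 0) :
    etaStar α A p (nablaBar X Z p) = secondFF α A p (X p) (Z p) := by
  have h0 : DifferentiableAt ℝ (fun q => e0' q (Z q)) p := by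
    unfold e0'
    fun_prop
  have h1 : DifferentiableAt ℝ (fun q => Z q 0) p := by fun_prop
  have h2 : DifferentiableAt ℝ (fun q => Z q 1) p := by fun_prop
  have key := ((hα.hasFDerivAt.cos.mul h1.hasFDerivAt).add
    (hα.hasFDerivAt.sin.mul h2.hasFDerivAt)).sub (hA.hasFDerivAt.mul h0.hasFDerivAt)
  have hzero := (hasFDerivAt_const (𝕜 := ℝ) (0 : ℝ) p).congr_of_eventuallyEq htan
  have hX := congrArg (fun L => L (X p)) (key.unique hzero)
  simp at hX
  rw [etaStar_nablaBar]
  simp only [secondFF, f1', f2', e1', e2']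
  linear_combination hX

theorem fderiv_sub_mul_cos {g v α : H3 → ℝ} {p : H3} (hg : DifferentiableAt ℝ g p)
    (hv : DifferentiableAt ℝ v p) (hα : DifferentiableAt ℝ α p) (x : H3) :
    fderiv ℝ (fun q => g q - v q * cos (α q)) p x =
      fderiv ℝ g p x - fderiv ℝ v p x * cos (α p) + v p * sin (α p) * fderiv ℝ α p x := by
  rw [(hg.hasFDerivAt.fun_sub (hv.hasFDerivAt.fun_mul hα.hasFDerivAt.cos)).fderiv]
  simp
  ring

theorem fderiv_sub_mul_sin {g v α : H3 → ℝ} {p : H3} (hg : DifferentiableAt ℝ g p)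
    (hv : DifferentiableAt ℝ v p) (hα : DifferentiableAt ℝ α p) (x : H3) :
    fderiv ℝ (fun q => g q - v q * sin (α q)) p x =
      fderiv ℝ g p x - fderiv ℝ v p x * sin (α p) - v p * cos (α p) * fderiv ℝ α p x := by
  rw [(hg.hasFDerivAt.fun_sub (hv.hasFDerivAt.fun_mul hα.hasFDerivAt.sin)).fderiv]
  simp
  ring

/-- Gauss equation: for tangent fields `X, Y, Z` with `[X,Y]` tangent,
`R(X,Y)Z = −(V(Y,Z)·dα(X) − V(X,Z)·dα(Y))·f₁`. -/
theorem gauss_equation (U : Set H3) (hU : IsOpen U) (α A : H3 → ℝ)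
    (hα : ContDiffOn ℝ (⊤ : ℕ∞) α U) (hA : ContDiffOn ℝ (⊤ : ℕ∞) A U)
    (X Y Z : H3 → H3)
    (hX : ContDiffOn ℝ (⊤ : ℕ∞) X U) (hY : ContDiffOn ℝ (⊤ : ℕ∞) Y U) (hZ : ContDiffOn ℝ (⊤ : ℕ∞) Z U)
    (hXtan : ∀ p ∈ U, etaStar α A p (X p) = 0)
    (hYtan : ∀ p ∈ U, etaStar α A p (Y p) = 0)
    (hZtan : ∀ p ∈ U, etaStar α A p (Z p) = 0)
    (hbtan : ∀ p ∈ U, etaStar α A p (lie X Y p) = 0) :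
    ∀ p ∈ U,
      nablaP α A X (fun q => nablaP α A Y Z q) p
        - nablaP α A Y (fun q => nablaP α A X Z q) p
        - nablaP α A (lie X Y) Z p
      = (-(secondFF α A p (Y p) (Z p) * fderiv ℝ α p (X p)
            - secondFF α A p (X p) (Z p) * fderiv ℝ α p (Y p))) • F1 α p := by
  intro p hp
  have hUp : U ∈ nhds p := hU.mem_nhds hp
  have hle : (2 : WithTop ℕ∞) ≤ ((⊤ : ℕ∞) : WithTop ℕ∞) := 
    WithTop.coe_le_coe.mpr le_top
  have hdα : DifferentiableAt ℝ α p := (hα.contDiffAt hUp).differentiableAt (by simp)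
  have hdA : DifferentiableAt ℝ A p := (hA.contDiffAt hUp).differentiableAt (by simp)
  have hdX : DifferentiableAt ℝ X p := (hX.contDiffAt hUp).differentiableAt (by simp)
  have hdY : DifferentiableAt ℝ Y p := (hY.contDiffAt hUp).differentiableAt (by simp)
  have hZ2 : ContDiffAt ℝ 2 Z p := (hZ.contDiffAt hUp).of_le hle
  have hdZ : DifferentiableAt ℝ Z p := hZ2.differentiableAt (by simp)
  have hb1 : ContDiffAt ℝ 2 (fun q => Z q 0) p := by fun_prop
  have hb2 : ContDiffAt ℝ 2 (fun q => Z q 1) p := by fun_prop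
  have hb0 : ContDiffAt ℝ 2 (fun q => e0' q (Z q)) p := by
    unfold e0'
    fun_prop
  have htan : ∀ᶠ q in nhds p, etaStar α A q (Z q) = 0 := Filter.mem_of_superset hUp hZtan
  have hv : ∀ W : H3 → H3, DifferentiableAt ℝ W p →
      DifferentiableAt ℝ (fun q => etaStar α A q (nablaBar W Z q)) p := by
    intro W hW
    simp only [etaStar_nablaBar]
    exact ((hdα.cos.fun_mul (differentiableAt_fderiv_apply hb1 hW)).fun_add
      (hdα.sin.fun_mul (differentiableAt_fderiv_apply hb2 hW))).fun_sub
      (hdA.fun_mul (differentiableAt_fderiv_apply hb0 hW))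
  have hsX := etaStar_nablaBar_eq_secondFF (X := X) hdα hdA hdZ htan
  have hsY := etaStar_nablaBar_eq_secondFF (X := Y) hdα hdA hdZ htan
  have hl0 := fderiv_apply_lie hb0 hdX hdY
  have hl1 := fderiv_apply_lie hb1 hdX hdY
  have hl2 := fderiv_apply_lie hb2 hdX hdY
  have hcs := sin_sq_add_cos_sq (α p)
  have c1 : ∀ V W : H3 → H3, DifferentiableAt ℝ W p →
      fderiv ℝ (fun q => nablaP α A W Z q 0) p (V p) = _ := fun V W hW => by
    simp only [nablaP_apply_zero]
    exact fderiv_sub_mul_cos (differentiableAt_fderiv_apply hb1 hW) (hv W hW) hdα (V p)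
  have c2 : ∀ V W : H3 → H3, DifferentiableAt ℝ W p →
      fderiv ℝ (fun q => nablaP α A W Z q 1) p (V p) = _ := fun V W hW => by
    simp only [nablaP_apply_one]
    exact fderiv_sub_mul_sin (differentiableAt_fderiv_apply hb2 hW) (hv W hW) hdα (V p)
  have e0'_sub : ∀ u v : H3, e0' p (u - v) = e0' p u - e0' p v := fun u v => by
    simp only [e0', Pi.sub_apply]
    ring
  apply ext_of_frame_components (p := p)
  · rw [e0'_sub, e0'_sub, e0'_nablaP, e0'_nablaP, e0'_nablaP]
    simp only [e0'_nablaP, hl0]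
    simp [e0', F1, E1, E2]
    ring
  · simp only [Pi.sub_apply]
    rw [nablaP_apply_zero, nablaP_apply_zero, nablaP_apply_zero]
    rw [etaStar_nablaBar, etaStar_nablaBar, etaStar_nablaBar]
    rw [c1 X Y hdY, c1 Y X hdX, c2 X Y hdY, c2 Y X hdX, hsX, hsY]
    simp only [e0'_nablaP, hl0, hl1, hl2]
    simp [F1, E1, E2]
    linear_combination
      ((fderiv ℝ (fun q => etaStar α A q (nablaBar Y Z q)) p (X p)
        - fderiv ℝ (fun q => etaStar α A q (nablaBar X Z q)) p (Y p)) * cos (α p)) * hcs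
  · simp only [Pi.sub_apply]
    rw [nablaP_apply_one, nablaP_apply_one, nablaP_apply_one]
    rw [etaStar_nablaBar, etaStar_nablaBar, etaStar_nablaBar]
    rw [c1 X Y hdY, c1 Y X hdX, c2 X Y hdY, c2 Y X hdX, hsX, hsY]
    simp only [e0'_nablaP, hl0, hl1, hl2]
    simp [F1, E1, E2]
    linear_combination
      ((fderiv ℝ (fun q => etaStar α A q (nablaBar Y Z q)) p (X p)
        - fderiv ℝ (fun q => etaStar α A q (nablaBar X Z q)) p (Y p)) * sin (α p)) * hcs
end
end

section
/- (Codazzi equation) Let X, Y, Z be smooth tangent vector fields on U (η* vanishes on each) such that [X,Y] is tangent. Then for all p ∈ U: X(V(Y,Z))(p) − V(∇_X Y, Z)(p) − V(Y, ∇_X Z)(p) − Y(V(X,Z))(p) + V(∇_Y X, Z)(p) + V(X, ∇_Y Z)(p) + V(T(X,Y), Z)(p) = 0, where V(X,Y) = −dα(X)·f¹(Y) + dA(X)·f²(Y) is the second fundamental form, T(X,Y) = ∇_X Y − ∇_Y X − [X,Y] is the torsion of ∇, and X(V(Y,Z)) denotes the directional derivative D(q ↦ V(Y,Z)(q))_p(X(p)).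 -/
open Real MeasureTheory

noncomputable section

/-- Leibniz rule for `q ↦ Dg_q (Y q)`. -/
theorem hasFDerivAt_fderiv_apply_field {g : H3 → ℝ} {Y : H3 → H3} {p : H3}
    (hg : ContDiffAt ℝ (⊤ : ℕ∞) g p) (hY : DifferentiableAt ℝ Y p) :
    HasFDerivAt (fun q => fderiv ℝ g q (Y q))
      ((fderiv ℝ g p).comp (fderiv ℝ Y p) + (fderiv ℝ (fderiv ℝ g) p).flip (Y p)) p := by
  have hg' : DifferentiableAt ℝ (fderiv ℝ g) p :=
    (hg.fderiv_right (m := 1) (by norm_cast)).differentiableAt (by norm_num)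
  exact hg'.hasFDerivAt.clm_apply hY.hasFDerivAt

theorem differentiableAt_f1' {α : H3 → ℝ} {Z : H3 → H3} {p : H3}
    (hα : DifferentiableAt ℝ α p) (hZ : DifferentiableAt ℝ Z p) :
    DifferentiableAt ℝ (fun q => f1' α q (Z q)) p := by
  have hZi (i : Fin 3) : DifferentiableAt ℝ (fun q => Z q i) p := differentiableAt_pi.1 hZ i
  unfold f1' e1' e2'
  fun_prop

/-- Directional derivative of `f¹(Z)`. -/
theorem fderiv_f1' {α : H3 → ℝ} {Z : H3 → H3} {p : H3}
    (hα : DifferentiableAt ℝ α p) (hZ : DifferentiableAt ℝ Z p) (v : H3) :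
    fderiv ℝ (fun q => f1' α q (Z q)) p v =
      -sin (α p) * fderiv ℝ (fun q => Z q 0) p v + cos (α p) * fderiv ℝ (fun q => Z q 1) p v
        - fderiv ℝ α p v * (cos (α p) * Z p 0 + sin (α p) * Z p 1) := by
  have hZi (i : Fin 3) : DifferentiableAt ℝ (fun q => Z q i) p := differentiableAt_pi.1 hZ i
  have h : HasFDerivAt (fun q => f1' α q (Z q)) _ p :=
    (hα.hasFDerivAt.sin.neg.mul (hZi 0).hasFDerivAt).add
      (hα.hasFDerivAt.cos.mul (hZi 1).hasFDerivAt)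
  rw [h.fderiv]
  simp [e2']
  ring

theorem differentiableAt_f2' {Z : H3 → H3} {p : H3} (hZ : DifferentiableAt ℝ Z p) :
    DifferentiableAt ℝ (fun q => f2' q (Z q)) p := by
  have hZi (i : Fin 3) : DifferentiableAt ℝ (fun q => Z q i) p := differentiableAt_pi.1 hZ i
  unfold f2' e0'
  fun_prop

/-- Leibniz rule for the second fundamental form. -/
theorem fderiv_secondFF {α A : H3 → ℝ} {Y Z : H3 → H3} {p : H3}
    (hα : ContDiffAt ℝ (⊤ : ℕ∞) α p) (hA : ContDiffAt ℝ (⊤ : ℕ∞) A p)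
    (hY : DifferentiableAt ℝ Y p) (hZ : DifferentiableAt ℝ Z p) (v : H3) :
    fderiv ℝ (fun q => secondFF α A q (Y q) (Z q)) p v =
      -(fderiv ℝ α p (fderiv ℝ Y p v) + fderiv ℝ (fderiv ℝ α) p v (Y p)) * f1' α p (Z p)
        - fderiv ℝ α p (Y p) * fderiv ℝ (fun q => f1' α q (Z q)) p v
        + (fderiv ℝ A p (fderiv ℝ Y p v) + fderiv ℝ (fderiv ℝ A) p v (Y p)) * f2' p (Z p)
        + fderiv ℝ A p (Y p) * fderiv ℝ (fun q => f2' q (Z q)) p v := by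
  have hf1 := differentiableAt_f1' (hα.differentiableAt (by simp)) hZ
  have h := ((hasFDerivAt_fderiv_apply_field hα hY).neg.mul hf1.hasFDerivAt).add
    ((hasFDerivAt_fderiv_apply_field hA hY).mul (differentiableAt_f2' hZ).hasFDerivAt)
  have h' : HasFDerivAt (fun q => secondFF α A q (Y q) (Z q)) _ p := h
  rw [h'.fderiv]
  simp
  ring

theorem f1'_nablaP (α A : H3 → ℝ) (X Z : H3 → H3) (p : H3) :
    f1' α p (nablaP α A X Z p) =
      -sin (α p) * fderiv ℝ (fun q => Z q 0) p (X p)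
        + cos (α p) * fderiv ℝ (fun q => Z q 1) p (X p) := by
  simp [f1', nablaP, nablaBar, eta, e1', e2', E0, E1, E2]
  ring

theorem f2'_nablaP (α A : H3 → ℝ) (X Z : H3 → H3) (p : H3) :
    f2' p (nablaP α A X Z p) = fderiv ℝ (fun q => f2' q (Z q)) p (X p) := by
  have h (c : ℝ) : f2' p (nablaBar X Z p - c • eta α p) =
      fderiv ℝ (fun q => f2' q (Z q)) p (X p) := by
    simp [f2', e0', nablaBar, eta, E0, E1, E2]
    ring
  exact h _

theorem secondFF_sub_left (α A : H3 → ℝ) (p v v' w : H3) :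
    secondFF α A p (v - v') w = secondFF α A p v w - secondFF α A p v' w := by
  simp only [secondFF, map_sub]
  ring

theorem fderiv_fderiv_symm {g : H3 → ℝ} {p : H3} (hg : ContDiffAt ℝ (⊤ : ℕ∞) g p) (v w : H3) :
    fderiv ℝ (fderiv ℝ g) p v w = fderiv ℝ (fderiv ℝ g) p w v :=
  hg.isSymmSndFDerivAt (by simpa using WithTop.coe_le_coe.2 (le_top : (2 : ℕ∞) ≤ ⊤)) v w

/-- Codazzi equation: for tangent fields `X, Y, Z` with `[X,Y]` tangent,
`∇_X V(Y,Z) − ∇_Y V(X,Z) + V(T(X,Y),Z) = 0`, written out with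
`∇_X V(Y,Z) = X(V(Y,Z)) − V(∇_X Y,Z) − V(Y,∇_X Z)` and
`T(X,Y) = ∇_X Y − ∇_Y X − [X,Y]`. -/
theorem codazzi_equation (U : Set H3) (hU : IsOpen U) (α A : H3 → ℝ)
    (hα : ContDiffOn ℝ (⊤ : ℕ∞) α U) (hA : ContDiffOn ℝ (⊤ : ℕ∞) A U)
    (X Y Z : H3 → H3)
    (hX : ContDiffOn ℝ (⊤ : ℕ∞) X U) (hY : ContDiffOn ℝ (⊤ : ℕ∞) Y U) (hZ : ContDiffOn ℝ (⊤ : ℕ∞) Z U)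
    (hXtan : ∀ p ∈ U, etaStar α A p (X p) = 0)
    (hYtan : ∀ p ∈ U, etaStar α A p (Y p) = 0)
    (hZtan : ∀ p ∈ U, etaStar α A p (Z p) = 0)
    (hbtan : ∀ p ∈ U, etaStar α A p (lie X Y p) = 0) :
    ∀ p ∈ U,
      fderiv ℝ (fun q => secondFF α A q (Y q) (Z q)) p (X p)
        - secondFF α A p (nablaP α A X Y p) (Z p)
        - secondFF α A p (Y p) (nablaP α A X Z p)
        - fderiv ℝ (fun q => secondFF α A q (X q) (Z q)) p (Y p)
        + secondFF α A p (nablaP α A Y X p) (Z p)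
        + secondFF α A p (X p) (nablaP α A Y Z p)
        + secondFF α A p (nablaP α A X Y p - nablaP α A Y X p - lie X Y p) (Z p)
      = 0 := by
  intro p hp
  have hUp := hU.mem_nhds hp
  have hα' := hα.contDiffAt hUp
  have hA' := hA.contDiffAt hUp
  have hX' := (hX.contDiffAt hUp).differentiableAt (by simp)
  have hY' := (hY.contDiffAt hUp).differentiableAt (by simp)
  have hZ' := (hZ.contDiffAt hUp).differentiableAt (by simp)
  have hdα := hα'.differentiableAt (by simp)
  have hZp : cos (α p) * Z p 0 + sin (α p) * Z p 1 = A p * e0' p (Z p) :=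
    sub_eq_zero.1 (hZtan p hp)
  rw [fderiv_secondFF hα' hA' hY' hZ', fderiv_secondFF hα' hA' hX' hZ',
    fderiv_f1' hdα hZ' (X p), fderiv_f1' hdα hZ' (Y p),
    fderiv_fderiv_symm hα' (X p), fderiv_fderiv_symm hA' (X p), hZp]
  simp only [lie, secondFF_sub_left]
  simp only [secondFF, f1'_nablaP, f2'_nablaP]
  ring
end
end

section
/- Let γ : (a,b) → U be a smooth transverse tangent curve: η*_{γ(t)}(γ'(t)) = 0 and f²_{γ(t)}(γ'(t)) ≠ 0 for all t, with f²(γ') of constant sign, and let ε = +1 if f²(γ') < 0 and ε = −1 if f²(γ') > 0 (so that ε·f²(T) < 0). Let T(t) = γ'(t)/|f²_{γ(t)}(γ'(t))| be the unit tangent, define the adapted derivative of T along γ by ∇̄T/dt(t) = c₀'(t)e₀(γ(t)) + c₁'(t)e₁(γ(t)) + c₂'(t)e₂(γ(t)) where c₁(t) = T(t)₁, c₂(t) = T(t)₂, c₀(t) = e⁰_{γ(t)}(T(t)), let ∇T/dt = ∇̄T/dt − η*(∇̄T/dt)·η, and define the curvature k(t) = ε·f¹_{γ(t)}( (1/|f²_{γ(t)}(γ'(t))|)·∇T/dt(t)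 ). Then for all t: k(t) = (ε/f²_{γ(t)}(γ'(t)))·( d/dt[ f¹_{γ(t)}(γ'(t)) / f²_{γ(t)}(γ'(t)) ] + A(γ(t))·dα_{γ(t)}(γ'(t)) ). -/
open Real MeasureTheory

noncomputable section

/-- The unit tangent `T(t) = γ'(t)/|f²(γ'(t))|` along a transverse curve. -/
def Tcurve (γ : ℝ → H3) (s : ℝ) : H3 := (1 / |f2' (γ s) (deriv γ s)|) • deriv γ s

/-- The adapted covariant derivative of `T` along `γ`:
`∇̄T/dt = c₀'·e₀ + c₁'·e₁ + c₂'·e₂` where `c₁ = T₁`, `c₂ = T₂`, `c₀ = e⁰(T)`. -/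
def covTbar (γ : ℝ → H3) (s : ℝ) : H3 :=
  deriv (fun u => e0' (γ u) (Tcurve γ u)) s • E0 (γ s)
  + deriv (fun u => Tcurve γ u 0) s • E1 (γ s)
  + deriv (fun u => Tcurve γ u 1) s • E2 (γ s)

/-- The projection `∇T/dt = ∇̄T/dt − η*(∇̄T/dt)·η`. -/
def covTproj (α A : H3 → ℝ) (γ : ℝ → H3) (s : ℝ) : H3 :=
  covTbar γ s - etaStar α A (γ s) (covTbar γ s) • eta α (γ s)

/-- The curvature `k(t) = ε·f¹( (1/|f²(γ')|)·∇T/dt )` of the transverse curve `γ`. -/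
def kcurv (α A : H3 → ℝ) (γ : ℝ → H3) (ε t : ℝ) : ℝ :=
  ε * f1' α (γ t) ((1 / |f2' (γ t) (deriv γ t)|) • covTproj α A γ t)

/-- `f¹` annihilates `η`, so the normal projection does not change the `f¹` component. -/
lemma f1'_smul_covTproj (α A : H3 → ℝ) (γ : ℝ → H3) (c t : ℝ) :
    f1' α (γ t) (c • covTproj α A γ t)
      = c * (-sin (α (γ t)) * deriv (fun u => Tcurve γ u 0) t
          + cos (α (γ t)) * deriv (fun u => Tcurve γ u 1) t) := by
  simp [f1', e1', e2', covTproj, covTbar, eta, E0, E1, E2]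
  ring

/-- On the domain of a transverse curve, the components of `T` are `-ε` times those of
`γ' / f²(γ')`. -/
lemma Tcurve_apply {γ : ℝ → H3} {ε s : ℝ} (hε : ε = 1 ∨ ε = -1)
    (hs : ε * f2' (γ s) (deriv γ s) < 0) (i : Fin 3) :
    Tcurve γ s i = -ε * (deriv γ s i / f2' (γ s) (deriv γ s)) := by
  rcases hε with rfl | rfl
  · have h : f2' (γ s) (deriv γ s) < 0 := by linarith
    simp only [Tcurve, abs_of_neg h, Pi.smul_apply, smul_eq_mul]
    field_simp
  · have h : 0 < f2' (γ s) (deriv γ s) := by linarith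
    simp only [Tcurve, abs_of_pos h, Pi.smul_apply, smul_eq_mul]
    field_simp

/-- The components of `γ' / f²(γ')` are differentiable where `f²(γ') ≠ 0`. -/
lemma differentiableAt_deriv_div_f2' {γ : ℝ → H3} {t : ℝ} (hγ : DifferentiableAt ℝ γ t)
    (hγ' : DifferentiableAt ℝ (deriv γ) t) (h : f2' (γ t) (deriv γ t) ≠ 0) (i : Fin 3) :
    DifferentiableAt ℝ (fun s => deriv γ s i / f2' (γ s) (deriv γ s)) t := by
  have h₀ := differentiableAt_pi.1 hγ
  have h₁ := differentiableAt_pi.1 hγ'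
  refine (h₁ i).div ?_ h
  unfold f2' e0'
  exact (h₁ 2).add ((((h₀ 1).mul (h₁ 0)).sub ((h₀ 0).mul (h₁ 1))).div_const 2)

/-- Formula for the curvature of a transverse tangent curve:
`k = (ε/f²(γ'))·( d/dt(f¹(γ')/f²(γ')) + A·dα(γ') )`. -/
theorem curvature_of_transverse_curve (U : Set H3) (hU : IsOpen U) (α A : H3 → ℝ)
    (hα : ContDiffOn ℝ (⊤ : ℕ∞) α U) (hA : ContDiffOn ℝ (⊤ : ℕ∞) A U)
    (a b : ℝ) (γ : ℝ → H3) (hγ : ContDiffOn ℝ (⊤ : ℕ∞) γ (Set.Ioo a b))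
    (hγU : ∀ t ∈ Set.Ioo a b, γ t ∈ U)
    (htan : ∀ t ∈ Set.Ioo a b, etaStar α A (γ t) (deriv γ t) = 0)
    (ε : ℝ) (hε : ε = 1 ∨ ε = -1)
    (hsign : ∀ t ∈ Set.Ioo a b, ε * f2' (γ t) (deriv γ t) < 0) :
    ∀ t ∈ Set.Ioo a b,
      kcurv α A γ ε t
        = (ε / f2' (γ t) (deriv γ t)) *
            (deriv (fun s => f1' α (γ s) (deriv γ s) / f2' (γ s) (deriv γ s)) t
              + A (γ t) * fderiv ℝ α (γ t) (deriv γ t)) := by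
  intro t ht
  have hnhds : Set.Ioo a b ∈ nhds t := isOpen_Ioo.mem_nhds ht
  have hγt : DifferentiableAt ℝ γ t := (hγ.contDiffAt hnhds).differentiableAt (by simp)
  have hγt' : DifferentiableAt ℝ (deriv γ) t :=
    ((hγ.deriv_of_isOpen (m := 1) isOpen_Ioo (by norm_cast)).contDiffAt hnhds).differentiableAt
      one_ne_zero
  have hαt : DifferentiableAt ℝ α (γ t) :=
    (hα.contDiffAt (hU.mem_nhds (hγU t ht))).differentiableAt (by simp)
  have hαγ : HasDerivAt (fun s => α (γ s)) (fderiv ℝ α (γ t) (deriv γ t)) t :=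
    hαt.hasFDerivAt.comp_hasDerivAt t hγt.hasDerivAt
  have hφ : f2' (γ t) (deriv γ t) ≠ 0 := right_ne_zero_of_mul (hsign t ht).ne
  have hx := (differentiableAt_deriv_div_f2' hγt hγt' hφ 0).hasDerivAt
  have hy := (differentiableAt_deriv_div_f2' hγt hγt' hφ 1).hasDerivAt
  have hT (i : Fin 3) : deriv (fun u => Tcurve γ u i) t
      = -ε * deriv (fun s => deriv γ s i / f2' (γ s) (deriv γ s)) t := by
    rw [← deriv_const_mul_field]
    exact Filter.EventuallyEq.deriv_eq <| Filter.eventually_of_mem hnhds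
      fun s hs => Tcurve_apply hε (hsign s hs) i
  have hf : (fun s => f1' α (γ s) (deriv γ s) / f2' (γ s) (deriv γ s))
      = fun s => -sin (α (γ s)) * (deriv γ s 0 / f2' (γ s) (deriv γ s))
        + cos (α (γ s)) * (deriv γ s 1 / f2' (γ s) (deriv γ s)) := by
    ext s
    simp only [f1', e1', e2']
    ring
  have hA' : cos (α (γ t)) * (deriv γ t 0 / f2' (γ t) (deriv γ t))
      + sin (α (γ t)) * (deriv γ t 1 / f2' (γ t) (deriv γ t)) = A (γ t) := by
    have h : cos (α (γ t)) * deriv γ t 0 + sin (α (γ t)) * deriv γ t 1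
        - A (γ t) * f2' (γ t) (deriv γ t) = 0 := htan t ht
    field_simp
    linarith
  have habs : |f2' (γ t) (deriv γ t)| = -ε * f2' (γ t) (deriv γ t) := by
    have h := hsign t ht
    rcases hε with rfl | rfl
    · rw [abs_of_neg (by linarith)]; ring
    · rw [abs_of_pos (by linarith)]; ring
  have hε0 : ε ≠ 0 := left_ne_zero_of_mul (hsign t ht).ne
  have hd := ((hαγ.sin.fun_neg.fun_mul hx).fun_add (hαγ.cos.fun_mul hy)).deriv
  rw [kcurv, f1'_smul_covTproj, hT, hT, hf, hd, habs, ← hA']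
  field_simp
  ring
end
end
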